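/- Let L ≥ 2. The projection of the Kennedy–Tasaki transformation onto the hole-free subspace is given by the qubit formula P U_KT P = P ( ∏_{1≤u<v≤L} exp[ (iπ/4)(1+σᶻ_u)(1−σᶻ_v) ] ) P. -/

import Mathlib

noncomputable section
open Complex Matrix

/-- The Hilbert space operators of the `L`-site spin-1 chain: matrices on `(ℂ³)^{⊗L}`,
with the tensor factors indexed by sites and the single-site ordered basis `(|+⟩,|0⟩,|−⟩)`. -/
abbrev Op (L : ℕ) : Type := Matrix (Fin L → Fin 3) (Fin L → Fin 3) ℂ

/-- The spin-1 matrix `Sˣ`. -/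
def Sx : Matrix (Fin 3) (Fin 3) ℂ :=
  ((Real.sqrt 2 : ℝ) : ℂ)⁻¹ • !![0, 1, 0; 1, 0, 1; 0, 1, 0]

/-- The spin-1 matrix `Sʸ`. -/
def Sy : Matrix (Fin 3) (Fin 3) ℂ :=
  ((Real.sqrt 2 : ℝ) : ℂ)⁻¹ • !![0, -I, 0; I, 0, -I; 0, I, 0]

/-- The spin-1 matrix `Sᶻ = diag(1,0,−1)`. -/
def Sz : Matrix (Fin 3) (Fin 3) ℂ := !![1, 0, 0; 0, 0, 0; 0, 0, -1]

/-- `site A j` is the one-site operator `A` acting on site `j` and identity elsewhere. -/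
def site {L : ℕ} (A : Matrix (Fin 3) (Fin 3) ℂ) (j : Fin L) : Op L :=
  Matrix.of fun f g => ∏ k : Fin L, if k = j then A (f k) (g k) else (if f k = g k then 1 else 0)

/-- One factor `exp(iπ Sᶻ_u Sˣ_v)` of the Kennedy–Tasaki transformation. -/
def ktFactor {L : ℕ} (u v : Fin L) : Op L :=
  NormedSpace.exp (((Real.pi : ℂ) * I) • (site Sz u * site Sx v))

/-- The Kennedy–Tasaki transformation `U_KT = ∏_{1 ≤ u < v ≤ L} exp(iπ Sᶻ_u Sˣ_v)`
(the factors pairwise commute, so the ordering is immaterial). -/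
def UKT (L : ℕ) : Op L :=
  ((List.finRange L).map fun u =>
    ((List.finRange L).map fun v => if u < v then ktFactor u v else 1).prod).prod

/-- The p-wave basis vector `|↑⟩ = (|+⟩ − |−⟩)/√2`. -/
def up : Fin 3 → ℂ := ![((Real.sqrt 2 : ℝ) : ℂ)⁻¹, 0, -((Real.sqrt 2 : ℝ) : ℂ)⁻¹]

/-- The p-wave basis vector `|↓⟩ = |0⟩`. -/
def down : Fin 3 → ℂ := ![0, 1, 0]

/-- The p-wave basis vector `|h⟩ = (|+⟩ + |−⟩)/√2`. -/
def hole : Fin 3 → ℂ := ![((Real.sqrt 2 : ℝ) : ℂ)⁻¹, 0, ((Real.sqrt 2 : ℝ) : ℂ)⁻¹]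

/-- The rank-one operator `|a⟩⟨b|`. -/
def ketbra (a b : Fin 3 → ℂ) : Matrix (Fin 3) (Fin 3) ℂ := Matrix.vecMulVec a (star b)

/-- `σˣ = |↑⟩⟨↓| + |↓⟩⟨↑|` (annihilating `|h⟩`). -/
def sigx : Matrix (Fin 3) (Fin 3) ℂ := ketbra up down + ketbra down up

/-- `σʸ = −i|↑⟩⟨↓| + i|↓⟩⟨↑|` (annihilating `|h⟩`). -/
def sigy : Matrix (Fin 3) (Fin 3) ℂ := (-I) • ketbra up down + I • ketbra down up

/-- `σᶻ = |↑⟩⟨↑| − |↓⟩⟨↓|` (annihilating `|h⟩`). -/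
def sigz : Matrix (Fin 3) (Fin 3) ℂ := ketbra up up - ketbra down down

/-- `n = |↑⟩⟨↑| + |↓⟩⟨↓|` (annihilating `|h⟩`). -/
def nMat : Matrix (Fin 3) (Fin 3) ℂ := ketbra up up + ketbra down down

/-- `h = |h⟩⟨h|`. -/
def hMat : Matrix (Fin 3) (Fin 3) ℂ := ketbra hole hole

/-- `P = ⊗_{j=1}^L n_j`, the orthogonal projection onto the hole-free subspace. -/
def Pproj (L : ℕ) : Op L := Matrix.of fun f g => ∏ k : Fin L, nMat (f k) (g k)

/-- The Heisenberg coupling `S_j · S_k`. -/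
def heis {L : ℕ} (j k : Fin L) : Op L :=
  site Sx j * site Sx k + site Sy j * site Sy k + site Sz j * site Sz k

/-- The bilinear-biquadratic Hamiltonian
`H_BLBQ(θ) = Σ_{j=1}^{L−1} [cosθ (S_j·S_{j+1}) + sinθ (S_j·S_{j+1})²]`. -/
def HBLBQ (L : ℕ) (θ : ℝ) : Op L :=
  ∑ j : Fin L, if h : (j : ℕ) + 1 < L then
    ((Real.cos θ : ℝ) : ℂ) • heis j ⟨(j : ℕ) + 1, h⟩
      + ((Real.sin θ : ℝ) : ℂ) • (heis j ⟨(j : ℕ) + 1, h⟩) ^ 2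
  else 0

/-- The self-dual Hamiltonian `H_SD(θ) = H_BLBQ(θ) + U_KT H_BLBQ(θ) U_KT`. -/
def HSD (L : ℕ) (θ : ℝ) : Op L := HBLBQ L θ + UKT L * HBLBQ L θ * UKT L

/-- The spin-1/2 XXZ Hamiltonian written in the p-wave basis:
`H_XXZ(θ) = (cosθ−sinθ) Σ_j (−σˣ_jσˣ_{j+1} + σʸ_jσʸ_{j+1}) + sinθ Σ_j σᶻ_jσᶻ_{j+1}`. -/
def HXXZ (L : ℕ) (θ : ℝ) : Op L :=
  ((Real.cos θ - Real.sin θ : ℝ) : ℂ) •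
    (∑ j : Fin L, if h : (j : ℕ) + 1 < L then
      -(site sigx j * site sigx ⟨(j : ℕ) + 1, h⟩) + site sigy j * site sigy ⟨(j : ℕ) + 1, h⟩
    else 0)
  + ((Real.sin θ : ℝ) : ℂ) •
    (∑ j : Fin L, if h : (j : ℕ) + 1 < L then
      site sigz j * site sigz ⟨(j : ℕ) + 1, h⟩
    else 0)

/-- The global product `∏_{j=1}^L exp(c • A_j)` of commuting single-site exponentials. -/
def globalProd (L : ℕ) (A : Matrix (Fin 3) (Fin 3) ℂ) (c : ℂ) : Op L :=
  ((List.finRange L).map fun j => NormedSpace.exp (c • site A j)).prod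

/-- The symmetry flux `F^y_j = exp(−iπ Σ_{k<j} Sʸ_k) · Sʸ_j`. -/
def fluxY (L : ℕ) (j : Fin L) : Op L :=
  NormedSpace.exp ((-((Real.pi : ℂ) * I)) •
    ∑ k : Fin L, if (k : ℕ) < (j : ℕ) then site Sy k else 0) * site Sy j


/-- The qubit form of the Kennedy–Tasaki transformation,
`∏_{1≤u<v≤L} exp[(iπ/4)(1+σᶻ_u)(1−σᶻ_v)]`. -/
def UKTqubit (L : ℕ) : Op L :=
  ((List.finRange L).map fun u =>
    ((List.finRange L).map fun v =>
      if u < v then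
        NormedSpace.exp ((((Real.pi / 4 : ℝ) : ℂ) * I) •
          ((1 + site sigz u) * (1 - site sigz v)))
      else 1).prod).prod

theorem exp_idem_aux {𝔸 : Type*} [NormedRing 𝔸] [NormedAlgebra ℂ 𝔸] [CompleteSpace 𝔸]
    (U : 𝔸) (hU : U * U = U) (c : ℂ) :
    NormedSpace.exp (c • U) = 1 + (Complex.exp c - 1) • U := by
  have hp : ∀ n : ℕ, U ^ (n + 1) = U := by
    intro n
    induction n with
    | zero => simp
    | succ n ih => rw [pow_succ, ih, hU]
  have h1 := NormedSpace.exp_series_hasSum_exp' (𝕂 := ℂ) (c • U)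
  have h2 := (NormedSpace.exp_series_hasSum_exp' (𝕂 := ℂ) c).smul_const U
  have h3 := h2.add (hasSum_ite_eq (0 : ℕ) (1 - U))
  refine h1.unique ?_
  convert h3 using 1
  · funext n
    cases n with
    | zero => simp
    | succ n => simp [smul_pow, hp, smul_smul]
  · rw [Complex.exp_eq_exp_ℂ, sub_smul, one_smul]; abel

theorem mul_exp_aux {𝔸 : Type*} [NormedRing 𝔸] [NormedAlgebra ℂ 𝔸] [CompleteSpace 𝔸]
    (P X Y : 𝔸) (h : P * X = P * Y) (hY : P * Y = Y * P) :
    P * NormedSpace.exp X = P * NormedSpace.exp Y := by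
  have hp : ∀ n : ℕ, P * X ^ n = P * Y ^ n := by
    intro n
    induction n with
    | zero => simp
    | succ n ih =>
      rw [pow_succ', pow_succ', ← mul_assoc, h, hY, mul_assoc, ih, ← mul_assoc, ← hY, mul_assoc]
  have h1 := (NormedSpace.exp_series_hasSum_exp' (𝕂 := ℂ) X).mul_left P
  have h2 := (NormedSpace.exp_series_hasSum_exp' (𝕂 := ℂ) Y).mul_left P
  refine h1.unique ?_
  convert h2 using 1
  funext n
  rw [mul_smul_comm, mul_smul_comm, hp]

theorem exp_cube_aux {𝔸 : Type*} [NormedRing 𝔸] [NormedAlgebra ℂ 𝔸] [CompleteSpace 𝔸]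
    (X : 𝔸) (hX : X * X * X = X) :
    NormedSpace.exp (((Real.pi : ℂ) * I) • X) = 1 - (2 : ℂ) • (X * X) := by
  have e4 : X * X * (X * X) = X * X := by rw [← mul_assoc, hX]
  have e3 : X * (X * X) = X := by rw [← mul_assoc, hX]
  set U : 𝔸 := (2 : ℂ)⁻¹ • (X * X + X) with hU
  set V : 𝔸 := (2 : ℂ)⁻¹ • (X * X - X) with hV
  have hUU : U * U = U := by
    simp only [hU, smul_mul_smul_comm, mul_add, add_mul, e4, e3, hX]
    module
  have hVV : V * V = V := by
    simp only [hV, smul_mul_smul_comm, mul_sub, sub_mul, e4, e3, hX]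
    module
  have hUV : U * V = 0 := by
    simp only [hU, hV, smul_mul_smul_comm, mul_sub, add_mul, e4, e3, hX]
    module
  have hVU : V * U = 0 := by
    simp only [hU, hV, smul_mul_smul_comm, mul_add, sub_mul, e4, e3, hX]
    module
  have hs : ((Real.pi : ℂ) * I) • X = ((Real.pi : ℂ) * I) • U + (-((Real.pi : ℂ) * I)) • V := by
    simp only [hU, hV]; module
  let _ : NormedAlgebra ℚ 𝔸 := NormedAlgebra.restrictScalars ℚ ℂ 𝔸
  have hc : Commute (((Real.pi : ℂ) * I) • U) ((-((Real.pi : ℂ) * I)) • V) := by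
    apply Commute.smul_left; apply Commute.smul_right
    exact hUV.trans hVU.symm
  rw [hs, NormedSpace.exp_add_of_commute hc, exp_idem_aux U hUU, exp_idem_aux V hVV,
    Complex.exp_neg, Complex.exp_pi_mul_I, mul_add, add_mul _ _ (_ • V), smul_mul_smul_comm, hUV]
  simp only [hU, hV, mul_one, one_mul]
  module

section mat
attribute [local instance] Matrix.linftyOpNormedRing Matrix.linftyOpNormedAlgebra

theorem mexp_idem {L : ℕ} (U : Op L) (hU : U * U = U) (c : ℂ) :
    NormedSpace.exp (c • U) = 1 + (Complex.exp c - 1) • U := exp_idem_aux U hU c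

theorem mmul_exp {L : ℕ} (P X Y : Op L) (h : P * X = P * Y) (hY : P * Y = Y * P) :
    P * NormedSpace.exp X = P * NormedSpace.exp Y := mul_exp_aux P X Y h hY

theorem mexp_cube {L : ℕ} (X : Op L) (hX : X * X * X = X) :
    NormedSpace.exp (((Real.pi : ℂ) * I) • X) = 1 - (2 : ℂ) • (X * X) := exp_cube_aux X hX
end mat

def tens {L : ℕ} (F : Fin L → Matrix (Fin 3) (Fin 3) ℂ) : Op L :=
  Matrix.of fun f g => ∏ k : Fin L, F k (f k) (g k)

theorem tens_mul {L : ℕ} (F G : Fin L → Matrix (Fin 3) (Fin 3) ℂ) :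
    tens F * tens G = tens (fun k => F k * G k) := by
  ext f g
  simp only [tens, Matrix.mul_apply, Matrix.of_apply, ← Finset.prod_mul_distrib]
  rw [Finset.prod_univ_sum, Fintype.piFinset_univ]

theorem site_eq {L : ℕ} (A : Matrix (Fin 3) (Fin 3) ℂ) (j : Fin L) :
    site A j = tens (fun k => if k = j then A else 1) := by
  ext f g
  simp only [site, tens, Matrix.of_apply]
  refine Finset.prod_congr rfl fun k _ => ?_
  split_ifs <;> simp_all [Matrix.one_apply]

theorem site_apply {L : ℕ} (A : Matrix (Fin 3) (Fin 3) ℂ) (j : Fin L) (f g : Fin L → Fin 3) :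
    site A j f g = A (f j) (g j) * ∏ k ∈ Finset.univ.erase j, if f k = g k then 1 else 0 := by
  simp only [site, Matrix.of_apply]
  rw [← Finset.mul_prod_erase _ _ (Finset.mem_univ j), if_pos rfl]
  congr 1
  refine Finset.prod_congr rfl fun k hk => ?_
  rw [if_neg (Finset.ne_of_mem_erase hk)]

theorem site_add {L : ℕ} (A B : Matrix (Fin 3) (Fin 3) ℂ) (j : Fin L) :
    site (A + B) j = site A j + site B j := by
  ext f g; simp only [site_apply, Matrix.add_apply, add_mul]

theorem site_sub {L : ℕ} (A B : Matrix (Fin 3) (Fin 3) ℂ) (j : Fin L) :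
    site (A - B) j = site A j - site B j := by
  ext f g; simp only [site_apply, Matrix.sub_apply, sub_mul]

theorem site_smul {L : ℕ} (c : ℂ) (A : Matrix (Fin 3) (Fin 3) ℂ) (j : Fin L) :
    site (c • A) j = c • site A j := by
  ext f g; simp only [site_apply, Matrix.smul_apply, smul_eq_mul, mul_assoc]

theorem site_one {L : ℕ} (j : Fin L) : site 1 j = (1 : Op L) := by
  ext f g
  simp only [site, Matrix.of_apply, Matrix.one_apply, ite_self]
  rw [Fintype.prod_ite_zero]
  simp [funext_iff]

theorem site_mul {L : ℕ} (A B : Matrix (Fin 3) (Fin 3) ℂ) (j : Fin L) :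
    site A j * site B j = site (A * B) j := by
  simp only [site_eq, tens_mul]
  congr 1; funext k; split_ifs <;> simp

theorem site_comm {L : ℕ} (A B : Matrix (Fin 3) (Fin 3) ℂ) {u v : Fin L} (h : u ≠ v) :
    site A u * site B v = site B v * site A u := by
  simp only [site_eq, tens_mul]
  congr 1; funext k; split_ifs <;> simp_all

theorem P_site {L : ℕ} (A B : Matrix (Fin 3) (Fin 3) ℂ) (j : Fin L) (h : nMat * A = nMat * B) :
    Pproj L * site A j = Pproj L * site B j := by
  have : Pproj L = tens (fun _ => nMat) := rfl
  simp only [this, site_eq, tens_mul]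
  congr 1; funext k; split_ifs <;> simp_all

theorem P_comm {L : ℕ} (A : Matrix (Fin 3) (Fin 3) ℂ) (j : Fin L) (h : nMat * A = A * nMat) :
    Pproj L * site A j = site A j * Pproj L := by
  have : Pproj L = tens (fun _ => nMat) := rfl
  simp only [this, site_eq, tens_mul]
  congr 1; funext k; split_ifs <;> simp_all

theorem site2_mul {L : ℕ} (A B C D : Matrix (Fin 3) (Fin 3) ℂ) {u v : Fin L} (h : u ≠ v) :
    (site A u * site B v) * (site C u * site D v) = site (A * C) u * site (B * D) v := by
  rw [mul_assoc, ← mul_assoc (site B v), ← site_comm C B h, mul_assoc, site_mul, ← mul_assoc,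
    site_mul]

theorem P_site2 {L : ℕ} (A B C D : Matrix (Fin 3) (Fin 3) ℂ) (u v : Fin L)
    (h1 : nMat * A = nMat * C) (h2 : nMat * B = nMat * D) (h3 : nMat * C = C * nMat) :
    Pproj L * (site A u * site B v) = Pproj L * (site C u * site D v) := by
  rw [← mul_assoc, P_site A C u h1, P_comm C u h3, mul_assoc, P_site B D v h2, ← mul_assoc,
    ← P_comm C u h3, mul_assoc]

theorem s2 : ((Real.sqrt 2 : ℝ) : ℂ)⁻¹ * ((Real.sqrt 2 : ℝ) : ℂ)⁻¹ = 1 / 2 := by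
  rw [← mul_inv, ← Complex.ofReal_mul, Real.mul_self_sqrt (by norm_num)]; norm_num

theorem Up_eq : ketbra up up = !![1/2, 0, -1/2; 0, 0, 0; -1/2, 0, 1/2] := by
  have := s2
  ext i j
  fin_cases i <;> fin_cases j <;>
    simp [ketbra, up, Matrix.vecMulVec_apply] <;> first | linear_combination this | linear_combination -this

theorem Dn_eq : ketbra down down = !![0, 0, 0; 0, 1, 0; 0, 0, 0] := by
  ext i j
  fin_cases i <;> fin_cases j <;> simp [ketbra, down, Matrix.vecMulVec_apply]

theorem Sx2_eq : Sx * Sx = !![1/2, 0, 1/2; 0, 1, 0; 1/2, 0, 1/2] := by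
  rw [Sx, smul_mul_smul_comm, s2]
  ext i j
  fin_cases i <;> fin_cases j <;> simp [Matrix.mul_apply, Fin.sum_univ_three] <;> norm_num

theorem Sx3 : Sx * Sx * Sx = Sx := by
  rw [Sx2_eq, Sx, mul_smul_comm]
  congr 1
  ext i j
  fin_cases i <;> fin_cases j <;> simp [Matrix.mul_apply, Fin.sum_univ_three] <;> norm_num

theorem Sz2_eq : Sz * Sz = !![1, 0, 0; 0, 0, 0; 0, 0, 1] := by
  ext i j
  fin_cases i <;> fin_cases j <;> simp [Sz, Matrix.mul_apply, Fin.sum_univ_three]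

theorem Sz3 : Sz * Sz * Sz = Sz := by
  rw [Sz2_eq, Sz]
  ext i j
  fin_cases i <;> fin_cases j <;> simp [Matrix.mul_apply, Fin.sum_univ_three]

theorem UpUp : ketbra up up * ketbra up up = ketbra up up := by
  rw [Up_eq]
  ext i j
  fin_cases i <;> fin_cases j <;> simp [Matrix.mul_apply, Fin.sum_univ_three] <;> norm_num

theorem DnDn : ketbra down down * ketbra down down = ketbra down down := by
  rw [Dn_eq]
  ext i j
  fin_cases i <;> fin_cases j <;> simp [Matrix.mul_apply, Fin.sum_univ_three]

theorem UpDn : ketbra up up * ketbra down down = 0 := by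
  rw [Up_eq, Dn_eq]
  ext i j
  fin_cases i <;> fin_cases j <;> simp [Matrix.mul_apply, Fin.sum_univ_three]

theorem DnUp : ketbra down down * ketbra up up = 0 := by
  rw [Up_eq, Dn_eq]
  ext i j
  fin_cases i <;> fin_cases j <;> simp [Matrix.mul_apply, Fin.sum_univ_three]

theorem n_Sz : nMat * (Sz * Sz) = nMat * ketbra up up := by
  rw [nMat, Sz2_eq, Up_eq, Dn_eq]
  ext i j
  fin_cases i <;> fin_cases j <;> simp [Matrix.mul_apply, Fin.sum_univ_three] <;> norm_num

theorem n_Sx : nMat * (Sx * Sx) = nMat * ketbra down down := by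
  rw [nMat, Sx2_eq, Up_eq, Dn_eq]
  ext i j
  fin_cases i <;> fin_cases j <;> simp [Matrix.mul_apply, Fin.sum_univ_three] <;> norm_num

theorem n_Up : nMat * ketbra up up = ketbra up up * nMat := by
  rw [nMat, add_mul, mul_add, UpUp, UpDn, DnUp]

theorem n_Dn : nMat * ketbra down down = ketbra down down * nMat := by
  rw [nMat, add_mul, mul_add, DnDn, UpDn, DnUp]

theorem n_p : nMat * (1 + sigz) = nMat * ((2 : ℂ) • ketbra up up) := by
  simp only [nMat, sigz, add_mul, mul_add, mul_sub, mul_smul_comm, UpUp, UpDn, DnUp, DnDn, mul_one]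
  module

theorem n_m : nMat * (1 - sigz) = nMat * ((2 : ℂ) • ketbra down down) := by
  simp only [nMat, sigz, add_mul, mul_sub, mul_smul_comm, UpUp, UpDn, DnUp, DnDn, mul_one]
  module

/-- The common sign factor. -/
def wF {L : ℕ} (u v : Fin L) : Op L :=
  1 - (2 : ℂ) • (site (ketbra up up) u * site (ketbra down down) v)

theorem P_U {L : ℕ} (u v : Fin L) :
    Pproj L * (site (ketbra up up) u * site (ketbra down down) v)
      = (site (ketbra up up) u * site (ketbra down down) v) * Pproj L := by
  rw [← mul_assoc, P_comm _ _ n_Up, mul_assoc, P_comm _ _ n_Dn, mul_assoc]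

theorem P_w {L : ℕ} (u v : Fin L) : Pproj L * wF u v = wF u v * Pproj L := by
  rw [wF, mul_sub, sub_mul, mul_smul_comm, smul_mul_assoc, P_U, mul_one, one_mul]

theorem P_kt {L : ℕ} {u v : Fin L} (h : u ≠ v) : Pproj L * ktFactor u v = Pproj L * wF u v := by
  rw [ktFactor, mexp_cube _ (by rw [site2_mul _ _ _ _ h, site2_mul _ _ _ _ h, Sz3, Sx3]),
    site2_mul _ _ _ _ h, wF, mul_sub, mul_sub, mul_smul_comm, mul_smul_comm,
    P_site2 _ _ _ _ u v n_Sz n_Sx n_Up]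

theorem P_qb {L : ℕ} {u v : Fin L} (h : u ≠ v) :
    Pproj L * NormedSpace.exp ((((Real.pi / 4 : ℝ) : ℂ) * I) •
          ((1 + site sigz u) * (1 - site sigz v))) = Pproj L * wF u v := by
  rw [mmul_exp (Pproj L) _
    (((Real.pi : ℂ) * I) • (site (ketbra up up) u * site (ketbra down down) v)) ?_ ?_,
    mexp_idem _ (by rw [site2_mul _ _ _ _ h, UpUp, DnDn]), Complex.exp_pi_mul_I, wF]
  · congr 1; module
  · have e : (1 + site sigz u) * (1 - site sigz v) = site (1 + sigz) u * site (1 - sigz) v := by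
      rw [site_add, site_sub, site_one, site_one]
    rw [e, mul_smul_comm, P_site2 _ _ _ _ u v n_p n_m (by rw [mul_smul_comm, smul_mul_assoc, n_Up]),
      site_smul, site_smul, smul_mul_smul_comm, mul_smul_comm, mul_smul_comm, smul_smul]
    congr 1
    push_cast; ring
  · rw [mul_smul_comm, smul_mul_assoc, P_U]

theorem P_list {L : ℕ} {ι : Type*} (P : Op L) (l : List ι) (a b : ι → Op L)
    (h : ∀ i, P * a i = P * b i) (hb : ∀ i, P * b i = b i * P) :
    P * (l.map a).prod = P * (l.map b).prod ∧ P * (l.map b).prod = (l.map b).prod * P := by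
  induction l with
  | nil => simp
  | cons i l ih =>
    simp only [List.map_cons, List.prod_cons]
    constructor
    · rw [← mul_assoc, h, hb, mul_assoc, ih.1, ← mul_assoc, ← hb, mul_assoc]
    · rw [← mul_assoc, hb, mul_assoc, ih.2, mul_assoc]

theorem P_dbl {L : ℕ} (a : Fin L → Fin L → Op L)
    (h : ∀ u v, u ≠ v → Pproj L * a u v = Pproj L * wF u v) :
    Pproj L * ((List.finRange L).map fun u =>
      ((List.finRange L).map fun v => if u < v then a u v else 1).prod).prod
    = Pproj L * ((List.finRange L).map fun u =>
      ((List.finRange L).map fun v => if u < v then wF u v else 1).prod).prod := by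
  have key := fun u : Fin L => P_list (Pproj L) (List.finRange L)
    (fun v => if u < v then a u v else 1) (fun v => if u < v then wF u v else 1)
    (fun v => by
      split_ifs with huv
      · exact h u v huv.ne
      · rfl)
    (fun v => by
      split_ifs with huv
      · exact P_w u v
      · simp)
  exact (P_list (Pproj L) (List.finRange L) _ _ (fun u => (key u).1) (fun u => (key u).2)).1

/-- The projection of the Kennedy–Tasaki transformation onto the hole-free
subspace is given by the qubit formula
`P U_KT P = P (∏_{1≤u<v≤L} exp[(iπ/4)(1+σᶻ_u)(1−σᶻ_v)]) P`. -/
theorem proj_UKT_qubit (L : ℕ) (hL : 2 ≤ L) :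
    Pproj L * UKT L * Pproj L = Pproj L * UKTqubit L * Pproj L := by
  congr 1
  exact (P_dbl _ fun _ _ h => P_kt h).trans (P_dbl _ fun _ _ h => P_qb h).symm

end
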